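/- arXiv:1509.07983 — 4 statements merged into one kernel-verified Lean document; each statement's English description precedes it below -/
import Mathlib

section
/- Consider the (𝒟, γ, n)-stochastic ball model with k = 2 clusters, centers γ₁, γ₂ ∈ ℝ^m, and Δ := ‖γ₁ − γ₂‖₂ > 2. Suppose Δ is such that there exist c′ > 0 and n₀′ with: for all n ≥ n₀′, with probability at least 1 − e^{−c′n}, the planted partition is the unique minimizer of the 2-means objective over all partitions of the N = 2n points into two clusters. Then there exist c > 0 and n₀ such that for all n ≥ n₀, with probability at least 1 − e^{−cn}, the following holds: for every leading eigenvector y of Φ₀ᵀΦ₀ (Φ₀ the centered data matrix), the planted partition equals some threshold partition ({i : y_i < θ}, {i : y_i ≥ θ}) of y, and it is the unique minimizer of the 2-means objective among all threshold partitions of y; that is, spectral k-means clustering recovers the planted clusters. -/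
open scoped BigOperators ENNReal RealInnerProductSpace
open Matrix MeasureTheory Finset

namespace Stmt11

variable {m : ℕ} {ι : Type*} [Fintype ι] [DecidableEq ι]

/-- The mean of the points of `x` indexed by the finset `S`. -/
noncomputable def clusterMean (x : ι → EuclideanSpace ℝ (Fin m)) (S : Finset ι) :
    EuclideanSpace ℝ (Fin m) :=
  ((S.card : ℝ))⁻¹ • ∑ i ∈ S, x i

/-- The 2-means objective of the partition `(S, Sᶜ)` of the points `x`. -/
noncomputable def twoMeansObj (x : ι → EuclideanSpace ℝ (Fin m)) (S : Finset ι) : ℝ :=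
  (∑ i ∈ S, ‖x i - clusterMean x S‖ ^ 2) + ∑ i ∈ Sᶜ, ‖x i - clusterMean x Sᶜ‖ ^ 2

/-- The centroid of all the points. -/
noncomputable def centroid (x : ι → EuclideanSpace ℝ (Fin m)) :
    EuclideanSpace ℝ (Fin m) :=
  ((Fintype.card ι : ℝ))⁻¹ • ∑ i, x i

/-- The Gram matrix `Φ₀ᵀΦ₀` of the centered data:
`(Φ₀ᵀΦ₀)_{pq} = ⟪x_p − μ, x_q − μ⟫`. -/
noncomputable def gram (x : ι → EuclideanSpace ℝ (Fin m)) : Matrix ι ι ℝ :=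
  fun p q => ⟪x p - centroid x, x q - centroid x⟫

/-- `y` is a leading eigenvector of the symmetric matrix `G`: a nonzero eigenvector
whose eigenvalue has the largest magnitude among all eigenvalues of `G`. -/
def LeadingEigenvector (G : Matrix ι ι ℝ) (y : ι → ℝ) : Prop :=
  y ≠ 0 ∧ ∃ lam : ℝ, G *ᵥ y = lam • y ∧
    ∀ (y' : ι → ℝ) (lam' : ℝ), y' ≠ 0 → G *ᵥ y' = lam' • y' → |lam'| ≤ |lam|

/-- The planted partition for the two-cluster stochastic ball model: the first cluster. -/
def planted (n : ℕ) : Finset (Fin 2 × Fin n) :=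
  Finset.univ.filter (fun p => p.1 = 0)

/-- Spectral 2-means clustering succeeds on the points `x`: for every leading
eigenvector `y` of `Φ₀ᵀΦ₀`, the planted partition is a threshold partition of `y` and
is the unique minimizer of the 2-means objective among threshold partitions of `y`. -/
noncomputable def SpectralRecovers (n : ℕ) (x : Fin 2 × Fin n → EuclideanSpace ℝ (Fin m)) :
    Prop :=
  ∀ y : Fin 2 × Fin n → ℝ, LeadingEigenvector (gram x) y →
    (∃ θ : ℝ, planted n = Finset.univ.filter (fun i => y i < θ) ∨
      planted n = (Finset.univ.filter (fun i => y i < θ))ᶜ) ∧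
    (∀ θ : ℝ, Finset.univ.filter (fun i => y i < θ) ≠ planted n →
      Finset.univ.filter (fun i => y i < θ) ≠ (planted n)ᶜ →
      twoMeansObj x (planted n) < twoMeansObj x (Finset.univ.filter (fun i => y i < θ)))

end Stmt11

open Stmt11

lemma aux_linalg {m : ℕ} {ι : Type*} [Fintype ι] [DecidableEq ι]
    (u : ι → EuclideanSpace ℝ (Fin m)) (G : Matrix ι ι ℝ) (hG : ∀ p q, G p q = ⟪u p, u q⟫)
    (y : ι → ℝ) (hy : LeadingEigenvector G y)
    (w : EuclideanSpace ℝ (Fin m)) (hw : ‖w‖ = 1) (hS : 0 < ∑ i, ⟪u i, w⟫ ^ 2) :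
    ∃ lam : ℝ, 0 < lam ∧ ∃ z : EuclideanSpace ℝ (Fin m), ‖z‖ = 1 ∧
      (∀ i, lam * y i = ⟪u i, z⟫) ∧ ∑ i, ⟪u i, w⟫ ^ 2 ≤ ∑ i, ⟪u i, z⟫ ^ 2 := by
  classical
  obtain ⟨hy0, lam, hlam, hmax⟩ := hy
  have hw0 : w ≠ 0 := by rintro rfl; simp at hw
  have : Nontrivial (EuclideanSpace ℝ (Fin m)) := ⟨w, 0, hw0⟩
  let T : EuclideanSpace ℝ (Fin m) →L[ℝ] EuclideanSpace ℝ (Fin m) :=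
    ∑ i, (innerSL ℝ (u i)).smulRight (u i)
  have hT : ∀ x, T x = ∑ i, ⟪u i, x⟫ • u i := by
    intro x
    simp [T]
  have hTT : ∀ x z, ⟪T x, z⟫ = ∑ i, ⟪u i, x⟫ * ⟪u i, z⟫ := by
    intro x z
    rw [hT, sum_inner]
    simp [inner_smul_left]
  have hsym : (T : EuclideanSpace ℝ (Fin m) →ₗ[ℝ] EuclideanSpace ℝ (Fin m)).IsSymmetric := by
    intro x z
    simp only [ContinuousLinearMap.coe_coe]
    rw [hTT, real_inner_comm, hTT]
    exact Finset.sum_congr rfl fun i _ => mul_comm _ _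
  have hev := hsym.hasEigenvalue_iSup_of_finiteDimensional
  obtain ⟨Lam, hLam⟩ : ∃ L : ℝ, L = (⨆ x : { x : EuclideanSpace ℝ (Fin m) // x ≠ 0 },
    RCLike.re ⟪(T : EuclideanSpace ℝ (Fin m) →ₗ[ℝ] EuclideanSpace ℝ (Fin m)) x, (x : EuclideanSpace ℝ (Fin m))⟫ / ‖(x : EuclideanSpace ℝ (Fin m))‖ ^ 2 : ℝ) := ⟨_, rfl⟩
  have hge : ∑ i, ⟪u i, w⟫ ^ 2 ≤ Lam := by
    rw [hLam]
    refine le_ciSup_of_le ?_ ⟨w, hw0⟩ ?_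
    · refine ⟨‖T‖, ?_⟩
      rintro _ ⟨x, rfl⟩
      exact (le_abs_self _).trans (T.rayleighQuotient_le_norm x)
    · simp only [ContinuousLinearMap.coe_coe, hTT, hw]
      simp [sq]
  have hev' : Module.End.HasEigenvalue (T : EuclideanSpace ℝ (Fin m) →ₗ[ℝ] EuclideanSpace ℝ (Fin m)) Lam := by
    rw [hLam]; exact hev
  obtain ⟨z', hz'⟩ := hev'.exists_hasEigenvector
  have hz1 : T z' = Lam • z' := hz'.apply_eq_smul
  have hz0 : z' ≠ 0 := hz'.2
  have hLpos : 0 < Lam := hS.trans_le hge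
  have hLl : |Lam| ≤ |lam| := by
    apply hmax (fun i => ⟪u i, z'⟫) Lam
    · intro h
      have : T z' = 0 := by
        rw [hT]
        exact Finset.sum_eq_zero fun i _ => by rw [show ⟪u i, z'⟫ = (0:ℝ) from congrFun h i, zero_smul]
      rw [hz1] at this
      rcases smul_eq_zero.1 this with h | h
      · exact hLpos.ne' h
      · exact hz0 h
    · ext p
      simp only [Matrix.mulVec, dotProduct, hG, Pi.smul_apply, smul_eq_mul]
      have : ⟪u p, T z'⟫ = Lam * ⟪u p, z'⟫ := by rw [hz1, inner_smul_right]
      rw [← this, hT, inner_sum]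
      exact Finset.sum_congr rfl fun i _ => by rw [inner_smul_right, mul_comm]
  let Z : EuclideanSpace ℝ (Fin m) := ∑ i, y i • u i
  have hZ : ∀ i, ⟪u i, Z⟫ = lam * y i := by
    intro p
    have := congrFun hlam p
    simp only [Matrix.mulVec, dotProduct, hG, Pi.smul_apply, smul_eq_mul] at this
    rw [← this]
    simp only [Z, inner_sum, inner_smul_right]
    exact Finset.sum_congr rfl fun i _ => mul_comm _ _
  have hZn : ‖Z‖ ^ 2 = lam * ∑ i, y i ^ 2 := by
    rw [← real_inner_self_eq_norm_sq]
    conv_lhs => arg 2; simp only [Z]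
    rw [sum_inner, Finset.mul_sum]
    refine Finset.sum_congr rfl fun i _ => ?_
    rw [inner_smul_left, hZ]; simp; ring
  have hysq : 0 < ∑ i, y i ^ 2 := by
    obtain ⟨i, hi⟩ := Function.ne_iff.1 hy0
    exact Finset.sum_pos' (fun i _ => sq_nonneg _) ⟨i, Finset.mem_univ _, sq_pos_of_ne_zero (by simpa using hi)⟩
  have hlpos : 0 < lam := by
    have h1 : 0 ≤ lam := by
      by_contra h
      push Not at h
      nlinarith [sq_nonneg ‖Z‖]
    have h2 : lam ≠ 0 := by
      rintro rfl
      simp at hLl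
      exact hLpos.ne' hLl
    exact lt_of_le_of_ne h1 h2.symm
  rw [abs_of_pos hlpos, abs_of_pos hLpos] at hLl
  have hZpos : 0 < ‖Z‖ := by
    have : 0 < ‖Z‖ ^ 2 := by rw [hZn]; positivity
    exact lt_of_le_of_ne (norm_nonneg _) (fun h => by rw [← h] at this; simp at this)
  refine ⟨lam * ‖Z‖⁻¹, by positivity, ‖Z‖⁻¹ • Z, ?_, ?_, ?_⟩
  · rw [norm_smul]; simp [hZpos.ne']
  · intro i
    rw [inner_smul_right, hZ]; ring
  · refine (hge.trans hLl).trans (le_of_eq ?_)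
    have : ∀ i, ⟪u i, ‖Z‖⁻¹ • Z⟫ ^ 2 = (‖Z‖ ^ 2)⁻¹ * lam ^ 2 * (y i) ^ 2 := by
      intro i
      rw [inner_smul_right, hZ]; ring
    simp_rw [this]
    rw [← Finset.mul_sum, hZn]
    field_simp

lemma aux_coord {m n : ℕ} (r : Fin n → EuclideanSpace ℝ (Fin m)) (C : Fin m → Fin m → ℝ) (δ s : ℝ)
    (h1 : ∀ j, |∑ i, r i j| ≤ n * δ)
    (h2 : ∀ j k, |∑ i, r i j * r i k - n * C j k| ≤ n * δ)
    (p : EuclideanSpace ℝ (Fin m)) (hp : ‖p‖ = 1) (hC : ∑ j, ∑ k, p j * p k * C j k = s) :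
    |∑ i, ⟪r i, p⟫| ≤ n * (m * δ) ∧ |∑ i, ⟪r i, p⟫ ^ 2 - n * s| ≤ n * (m ^ 2 * δ) := by
  have hpj : ∀ j, |p j| ≤ 1 := fun j => by
    have := PiLp.norm_apply_le p j
    rwa [hp, Real.norm_eq_abs] at this
  have hin : ∀ i, ⟪r i, p⟫ = ∑ j, p j * r i j := fun i => by
    simp [PiLp.inner_apply]
  constructor
  · have : ∑ i, ⟪r i, p⟫ = ∑ j, p j * ∑ i, r i j := by
      simp_rw [hin, Finset.mul_sum]
      exact Finset.sum_comm
    rw [this]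
    refine (Finset.abs_sum_le_sum_abs _ _).trans ?_
    have : ∀ j ∈ (Finset.univ : Finset (Fin m)), |p j * ∑ i, r i j| ≤ n * δ := by
      intro j _
      rw [abs_mul]
      nlinarith [hpj j, h1 j, abs_nonneg (∑ i, r i j), abs_nonneg (p j)]
    refine (Finset.sum_le_sum this).trans (le_of_eq ?_)
    simp; ring
  · have : ∑ i, ⟪r i, p⟫ ^ 2 - n * s =
        ∑ j, ∑ k, p j * p k * (∑ i, r i j * r i k - n * C j k) := by
      rw [← hC]
      simp_rw [hin, sq, Finset.sum_mul_sum, mul_sub, Finset.sum_sub_distrib, Finset.mul_sum]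
      congr 1
      · rw [Finset.sum_comm]
        refine Finset.sum_congr rfl fun j _ => ?_
        rw [Finset.sum_comm]
        refine Finset.sum_congr rfl fun k _ => Finset.sum_congr rfl fun i _ => by ring
      · refine Finset.sum_congr rfl fun j _ => Finset.sum_congr rfl fun k _ => by ring
    rw [this]
    refine (Finset.abs_sum_le_sum_abs _ _).trans ?_
    have h : ∀ j ∈ (Finset.univ : Finset (Fin m)),
        |∑ k, p j * p k * (∑ i, r i j * r i k - n * C j k)| ≤ m * (n * δ) := by
      intro j _
      refine (Finset.abs_sum_le_sum_abs _ _).trans ?_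
      have : ∀ k ∈ (Finset.univ : Finset (Fin m)),
          |p j * p k * (∑ i, r i j * r i k - n * C j k)| ≤ n * δ := by
        intro k _
        rw [abs_mul, abs_mul]
        have : |p j| * |p k| ≤ 1 := mul_le_one₀ (hpj j) (abs_nonneg _) (hpj k)
        have h0 := abs_nonneg (∑ i, r i j * r i k - n * C j k)
        nlinarith [h2 j k]
      refine (Finset.sum_le_sum this).trans (le_of_eq ?_)
      simp
    refine (Finset.sum_le_sum h).trans (le_of_eq ?_)
    simp; ring

lemma aux_centered {m n : ℕ} (hn : 0 < n) (γ : Fin 2 → EuclideanSpace ℝ (Fin m))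
    (r : Fin 2 × Fin n → EuclideanSpace ℝ (Fin m)) (a : Fin 2) (i : Fin n)
    (p : EuclideanSpace ℝ (Fin m)) :
    ⟪(γ a + r (a, i)) - centroid (fun p : Fin 2 × Fin n => γ p.1 + r p), p⟫ =
      ⟪γ a, p⟫ + ⟪r (a, i), p⟫ - ((⟪γ 0, p⟫ + ⟪γ 1, p⟫) / 2 +
        (∑ i, ⟪r (0, i), p⟫ + ∑ i, ⟪r (1, i), p⟫) / (2 * n)) := by
  have hn' : (n : ℝ) ≠ 0 := by positivity
  rw [inner_sub_left, inner_add_left, Stmt11.centroid, inner_smul_left, sum_inner,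
    Fintype.sum_prod_type]
  simp only [Fin.sum_univ_two, inner_add_left, Finset.sum_add_distrib]
  simp
  field_simp

lemma aux_S {m n : ℕ} (hn : 0 < n) (γ : Fin 2 → EuclideanSpace ℝ (Fin m))
    (r : Fin 2 × Fin n → EuclideanSpace ℝ (Fin m)) 
    (p : EuclideanSpace ℝ (Fin m)) :
    ∑ q : Fin 2 × Fin n, ⟪(γ q.1 + r q) - centroid (fun p : Fin 2 × Fin n => γ p.1 + r p), p⟫ ^ 2 =
      2 * n * (⟪γ 0 - γ 1, p⟫ / 2) ^ 2
      - 2 * n * ((∑ i, ⟪r (0, i), p⟫ + ∑ i, ⟪r (1, i), p⟫) / (2 * n)) ^ 2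
      + 2 * (⟪γ 0 - γ 1, p⟫ / 2) * (∑ i, ⟪r (0, i), p⟫ - ∑ i, ⟪r (1, i), p⟫)
      + ∑ i, ⟪r (0, i), p⟫ ^ 2 + ∑ i, ⟪r (1, i), p⟫ ^ 2 := by
  have hn' : (n : ℝ) ≠ 0 := by positivity
  have key : ∀ (c : ℝ) (f : Fin n → ℝ), ∑ i, (f i + c) ^ 2 = ∑ i, f i ^ 2 + 2 * c * ∑ i, f i + n * c ^ 2 := by
    intro c f
    simp_rw [add_sq, Finset.sum_add_distrib]
    rw [Finset.mul_sum]
    simp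
    exact Finset.sum_congr rfl fun i _ => by ring
  rw [Fintype.sum_prod_type]
  simp only [Fin.sum_univ_two, aux_centered hn]
  have e : ∀ a b c : ℝ, a + b - c = b + (a - c) := fun a b c => by ring
  simp_rw [e, key, inner_sub_left]
  field_simp
  ring

lemma aux_det {m n : ℕ} (hn : 0 < n) (γ : Fin 2 → EuclideanSpace ℝ (Fin m))
    (r : Fin 2 × Fin n → EuclideanSpace ℝ (Fin m)) (hr : ∀ p, ‖r p‖ ≤ 1)
    (C : Fin m → Fin m → ℝ) (δ s : ℝ) (hs : 0 ≤ s) (hδ0 : 0 ≤ δ) (hδ1 : δ ≤ 1)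
    (hγ : 2 < ‖γ 0 - γ 1‖)
    (hδ : 4 * (‖γ 0 - γ 1‖ / 2) * m * δ + 3 * m ^ 2 * δ < (‖γ 0 - γ 1‖ / 2) ^ 2 - 1)
    (h1 : ∀ a j, |∑ i, r (a, i) j| ≤ n * δ)
    (h2 : ∀ a j k, |∑ i, r (a, i) j * r (a, i) k - n * C j k| ≤ n * δ)
    (hC : ∀ p : EuclideanSpace ℝ (Fin m), ‖p‖ = 1 → ∑ j, ∑ k, p j * p k * C j k = s)
    (y : Fin 2 × Fin n → ℝ)
    (hy : LeadingEigenvector (gram (fun p : Fin 2 × Fin n => γ p.1 + r p)) y) :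
    ∃ θ : ℝ, planted n = Finset.univ.filter (fun i => y i < θ) ∨
      planted n = (Finset.univ.filter (fun i => y i < θ))ᶜ := by
  have hn' : (0 : ℝ) < n := by positivity
  set D := ‖γ 0 - γ 1‖ / 2 with hD
  have hD1 : 1 < D := by rw [hD]; linarith
  have hDn : ‖γ 0 - γ 1‖ = 2 * D := by rw [hD]; ring
  set w : EuclideanSpace ℝ (Fin m) := (2 * D)⁻¹ • (γ 0 - γ 1) with hw
  have hw1 : ‖w‖ = 1 := by
    rw [hw, norm_smul, hDn, Real.norm_of_nonneg (by positivity)]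
    field_simp
  have hwd : ⟪γ 0 - γ 1, w⟫ / 2 = D := by
    rw [hw, inner_smul_right, real_inner_self_eq_norm_sq, hDn]
    field_simp
  have hc : ∀ a (p : EuclideanSpace ℝ (Fin m)), ‖p‖ = 1 →
      |∑ i, ⟪r (a, i), p⟫| ≤ n * (m * δ) ∧ |∑ i, ⟪r (a, i), p⟫ ^ 2 - n * s| ≤ n * (m ^ 2 * δ) :=
    fun a p hp => aux_coord (fun i => r (a, i)) C δ s (h1 a) (h2 a) p hp (hC p hp)
  have hm0 : (0 : ℝ) ≤ m := by positivity
  have lower : 2 * n * (D ^ 2 + s - 2 * D * m * δ - 2 * m ^ 2 * δ) ≤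
      ∑ q : Fin 2 × Fin n,
        ⟪(γ q.1 + r q) - centroid (fun p : Fin 2 × Fin n => γ p.1 + r p), w⟫ ^ 2 := by
    rw [aux_S hn, hwd]
    obtain ⟨a1, a2⟩ := hc 0 w hw1
    obtain ⟨b1, b2⟩ := hc 1 w hw1
    rw [abs_le] at a1 a2 b1 b2
    set T0 := ∑ i, ⟪r (0, i), w⟫
    set T1 := ∑ i, ⟪r (1, i), w⟫
    have ht : ((T0 + T1) / (2 * n)) ^ 2 ≤ m ^ 2 * δ := by
      have h1 : |(T0 + T1) / (2 * n)| ≤ m * δ := by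
        rw [abs_le, div_le_iff₀ (by positivity), le_div_iff₀ (by positivity)]
        constructor <;> nlinarith
      rw [← sq_abs]
      calc _ ≤ (m * δ) ^ 2 := by gcongr
        _ = m ^ 2 * (δ * δ) := by ring
        _ ≤ m ^ 2 * (1 * δ) := by gcongr
        _ = _ := by ring
    have ht' := mul_le_mul_of_nonneg_left ht (by positivity : (0:ℝ) ≤ 2 * n)
    have hd : D * (-(2 * (n * (m * δ)))) ≤ D * (T0 - T1) :=
      mul_le_mul_of_nonneg_left (by linarith) (by linarith)
    nlinarith
  have hSpos : 0 < ∑ q : Fin 2 × Fin n,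
        ⟪(γ q.1 + r q) - centroid (fun p : Fin 2 × Fin n => γ p.1 + r p), w⟫ ^ 2 := by
    refine lt_of_lt_of_le (mul_pos (by positivity) ?_) lower
    have : 0 ≤ D * m * δ := by positivity
    have : 0 ≤ m ^ 2 * δ := by positivity
    nlinarith
  obtain ⟨lam, hlam, z, hz1, hyz, hle⟩ := aux_linalg
    (fun q : Fin 2 × Fin n => (γ q.1 + r q) - centroid (fun p : Fin 2 × Fin n => γ p.1 + r p))
    _ (fun p q => rfl) y hy w hw1 hSpos
  set d := ⟪γ 0 - γ 1, z⟫ / 2 with hd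
  have hdD : |d| ≤ D := by
    have := abs_real_inner_le_norm (γ 0 - γ 1) z
    rw [hz1, hDn] at this
    rw [hd, abs_div, abs_two]; linarith
  have upper : ∑ q : Fin 2 × Fin n,
        ⟪(γ q.1 + r q) - centroid (fun p : Fin 2 × Fin n => γ p.1 + r p), z⟫ ^ 2 ≤
        2 * n * (d ^ 2 + s + 2 * D * m * δ + m ^ 2 * δ) := by
    rw [aux_S hn, ← hd]
    obtain ⟨a1, a2⟩ := hc 0 z hz1
    obtain ⟨b1, b2⟩ := hc 1 z hz1
    rw [abs_le] at a1 a2 b1 b2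
    set T0 := ∑ i, ⟪r (0, i), z⟫
    set T1 := ∑ i, ⟪r (1, i), z⟫
    have hd : d * (T0 - T1) ≤ D * (2 * (n * (m * δ))) := by
      refine (le_abs_self _).trans ?_
      rw [abs_mul]
      refine mul_le_mul hdD ?_ (abs_nonneg _) (by linarith)
      rw [abs_le]; constructor <;> linarith
    have : 0 ≤ 2 * n * ((T0 + T1) / (2 * n)) ^ 2 := by positivity
    nlinarith
  have hd1 : 1 < |d| := by
    have h := (lower.trans hle).trans upper
    have h := le_of_mul_le_mul_left h (by positivity)
    have : 1 < d ^ 2 := by nlinarith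
    rwa [one_lt_sq_iff_one_lt_abs] at this
  have hri : ∀ p, |⟪r p, z⟫| ≤ 1 := fun p => by
    have := abs_real_inner_le_norm (r p) z
    rw [hz1] at this
    linarith [hr p]
  set t := (∑ i, ⟪r (0, i), z⟫ + ∑ i, ⟪r (1, i), z⟫) / (2 * n) with ht
  have hd2 : ⟪γ 0, z⟫ - ⟪γ 1, z⟫ = 2 * d := by rw [hd, inner_sub_left]; ring
  have y0 : ∀ i, lam * y (0, i) = d + ⟪r (0, i), z⟫ - t := by
    intro i
    rw [hyz]
    simp only
    rw [aux_centered hn, ← ht]; linarith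
  have y1 : ∀ i, lam * y (1, i) = -d + ⟪r (1, i), z⟫ - t := by
    intro i
    rw [hyz]
    simp only
    rw [aux_centered hn, ← ht]; linarith
  have hth : ∀ p, y p < -t / lam ↔ lam * y p < -t := fun p => by
    rw [lt_div_iff₀ hlam, mul_comm]
  refine ⟨-t / lam, ?_⟩
  rcases lt_abs.1 hd1 with h | h
  · right
    ext ⟨a, i⟩
    have hr' := abs_le.1 (hri (a, i))
    simp only [planted, Finset.mem_filter, Finset.mem_univ, true_and, Finset.mem_compl, hth]
    fin_cases a
    · simp only [Fin.zero_eta, true_iff, not_lt] at *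
      rw [y0]; linarith
    · simp only [Fin.mk_one, one_ne_zero, false_iff, not_not] at *
      rw [y1]; linarith
  · left
    ext ⟨a, i⟩
    have hr' := abs_le.1 (hri (a, i))
    simp only [planted, Finset.mem_filter, Finset.mem_univ, true_and, hth]
    fin_cases a
    · simp only [Fin.zero_eta, true_iff] at *
      rw [y0]; linarith
    · simp only [Fin.mk_one, one_ne_zero, false_iff, not_lt] at *
      rw [y1]; linarith

lemma aux_hoeff {m n : ℕ} (𝒟 : Measure (EuclideanSpace ℝ (Fin m))) [IsProbabilityMeasure 𝒟]
    (f : EuclideanSpace ℝ (Fin m) → ℝ) (hf : Measurable f)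
    (hb : ∀ᵐ x ∂𝒟, f x ∈ Set.Icc (-1 : ℝ) 1) (δ : ℝ) (hδ : 0 < δ) (hn : 0 < n) (a : Fin 2) :
    (Measure.pi fun _ : Fin 2 × Fin n => 𝒟).real
      {r | n * δ ≤ ∑ i, f (r (a, i)) - n * ∫ x, f x ∂𝒟} ≤ Real.exp (-(δ ^ 2 / 2) * n) := by
  have hn' : (0 : ℝ) < n := by positivity
  let X : Fin 2 × Fin n → EuclideanSpace ℝ (Fin m) → ℝ := fun _ x => f x - ∫ x, f x ∂𝒟
  have hind : ProbabilityTheory.iIndepFun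
      (fun (i : Fin 2 × Fin n) (ω : Fin 2 × Fin n → EuclideanSpace ℝ (Fin m)) => X i (ω i))
      (Measure.pi fun _ : Fin 2 × Fin n => 𝒟) :=
    ProbabilityTheory.iIndepFun_pi (fun i => (hf.sub_const _).aemeasurable)
  have hsub : ∀ i ∈ (Finset.univ.image (fun i : Fin n => (a, i))),
      ProbabilityTheory.HasSubgaussianMGF
        (fun (ω : Fin 2 × Fin n → EuclideanSpace ℝ (Fin m)) => X i (ω i)) 1
        (Measure.pi fun _ : Fin 2 × Fin n => 𝒟) := by
    intro i _
    have hmp := measurePreserving_eval (fun _ : Fin 2 × Fin n => 𝒟) i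
    have h := ProbabilityTheory.hasSubgaussianMGF_of_mem_Icc
      (μ := Measure.pi fun _ : Fin 2 × Fin n => 𝒟) (X := fun ω => f (ω i)) (a := -1) (b := 1)
      (hf.comp (measurable_pi_apply i)).aemeasurable
      (hmp.quasiMeasurePreserving.ae hb)
    have e : ∫ ω, f (ω i) ∂(Measure.pi fun _ : Fin 2 × Fin n => 𝒟) = ∫ x, f x ∂𝒟 := by
      conv_rhs => rw [← hmp.map_eq]
      rw [integral_map (measurable_pi_apply i).aemeasurable hf.aestronglyMeasurable]
    rw [e] at h
    convert h using 1
    norm_num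
  have := ProbabilityTheory.HasSubgaussianMGF.measure_sum_ge_le_of_iIndepFun hind
    (c := fun _ => 1) hsub (ε := n * δ) (by positivity)
  have hinj : Function.Injective (fun i : Fin n => (a, i)) := fun i j h => by simpa using h
  rw [Finset.sum_image (fun x _ y _ h => hinj h)] at this
  simp only [Finset.sum_image (fun x _ y _ h => hinj h), X, Finset.sum_sub_distrib] at this
  simp at this
  refine this.trans (le_of_eq ?_)
  congr 1
  field_simp

lemma aux_hoeff2 {m n : ℕ} (𝒟 : Measure (EuclideanSpace ℝ (Fin m))) [IsProbabilityMeasure 𝒟]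
    (f : EuclideanSpace ℝ (Fin m) → ℝ) (hf : Measurable f)
    (hb : ∀ᵐ x ∂𝒟, f x ∈ Set.Icc (-1 : ℝ) 1) (δ : ℝ) (hδ : 0 < δ) (hn : 0 < n) (a : Fin 2) :
    (Measure.pi fun _ : Fin 2 × Fin n => 𝒟)
      {r | ¬ |∑ i, f (r (a, i)) - n * ∫ x, f x ∂𝒟| ≤ n * δ} ≤
        ENNReal.ofReal (2 * Real.exp (-(δ ^ 2 / 2) * n)) := by
  have h1 := aux_hoeff 𝒟 f hf hb δ hδ hn a
  have h2 := aux_hoeff 𝒟 (fun x => - f x) hf.neg (by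
    filter_upwards [hb] with x hx
    exact ⟨by linarith [hx.2], by linarith [hx.1]⟩) δ hδ hn a
  rw [← ofReal_measureReal]
  apply ENNReal.ofReal_le_ofReal
  refine (measureReal_mono (s₂ := _ ∪ _) ?_).trans ((measureReal_union_le _ _).trans
    ((add_le_add h1 h2).trans (by linarith)))
  intro r hr
  simp only [Set.mem_ofPred_eq, not_le, lt_abs] at hr
  rcases hr with h | h
  · left; exact h.le
  · right
    simp only [Set.mem_ofPred_eq, Finset.sum_neg_distrib, integral_neg]
    linarith

lemma aux_union {m : ℕ} (𝒟 : Measure (EuclideanSpace ℝ (Fin m))) [IsProbabilityMeasure 𝒟]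
    {τ : Type*} [Fintype τ] (f : τ → EuclideanSpace ℝ (Fin m) → ℝ) (hf : ∀ t, Measurable (f t))
    (hb : ∀ t, ∀ᵐ x ∂𝒟, f t x ∈ Set.Icc (-1 : ℝ) 1) (δ : ℝ) (hδ : 0 < δ) {n : ℕ} (hn : 0 < n) :
    (Measure.pi fun _ : Fin 2 × Fin n => 𝒟)
      {r | ¬ ∀ t a, |∑ i, f t (r (a, i)) - n * ∫ x, f t x ∂𝒟| ≤ n * δ} ≤
        ENNReal.ofReal ((Fintype.card τ * 4) * Real.exp (-(δ ^ 2 / 2) * n)) := by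
  have : {r : Fin 2 × Fin n → EuclideanSpace ℝ (Fin m) |
      ¬ ∀ t a, |∑ i, f t (r (a, i)) - n * ∫ x, f t x ∂𝒟| ≤ n * δ} ⊆
      ⋃ q ∈ (Finset.univ : Finset (τ × Fin 2)),
        {r | ¬ |∑ i, f q.1 (r (q.2, i)) - n * ∫ x, f q.1 x ∂𝒟| ≤ n * δ} := by
    intro r hr
    simp only [Set.mem_ofPred_eq, not_forall] at hr
    obtain ⟨t, a, h⟩ := hr
    simp only [Set.mem_iUnion]
    exact ⟨(t, a), Finset.mem_univ _, h⟩
  refine (measure_mono this).trans ((measure_biUnion_finset_le _ _).trans ?_)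
  refine (Finset.sum_le_sum (fun q _ => aux_hoeff2 𝒟 (f q.1) (hf _) (hb _) δ hδ hn q.2)).trans ?_
  rw [Finset.sum_const, ← ENNReal.ofReal_nsmul]
  apply ENNReal.ofReal_le_ofReal
  simp
  linarith

lemma aux_mean {m : ℕ} (𝒟 : Measure (EuclideanSpace ℝ (Fin m))) 
    (hrot : ∀ T : EuclideanSpace ℝ (Fin m) ≃ₗᵢ[ℝ] EuclideanSpace ℝ (Fin m),
      𝒟.map T = 𝒟) (j : Fin m) : ∫ x, x j ∂𝒟 = 0 := by
  have h : ∫ x, x j ∂𝒟 = ∫ x, x j ∂(𝒟.map (LinearIsometryEquiv.neg ℝ)) := by rw [hrot]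
  rw [integral_map (LinearIsometryEquiv.continuous _).measurable.aemeasurable
    (by fun_prop)] at h
  simp [integral_neg] at h
  linarith

lemma aux_cov {m : ℕ} (𝒟 : Measure (EuclideanSpace ℝ (Fin m))) [IsProbabilityMeasure 𝒟]
    (hrot : ∀ T : EuclideanSpace ℝ (Fin m) ≃ₗᵢ[ℝ] EuclideanSpace ℝ (Fin m),
      𝒟.map T = 𝒟) (hball : ∀ᵐ x ∂𝒟, ‖x‖ ≤ 1) :
    ∃ s : ℝ, 0 ≤ s ∧ ∀ p : EuclideanSpace ℝ (Fin m), ‖p‖ = 1 →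
      ∑ j, ∑ k, p j * p k * ∫ x, x j * x k ∂𝒟 = s := by
  have hint : ∀ j k : Fin m, Integrable (fun x : EuclideanSpace ℝ (Fin m) => x j * x k) 𝒟 := by
    intro j k
    refine Integrable.of_bound (C := 1) (by fun_prop) ?_
    filter_upwards [hball] with x hx
    rw [norm_mul]
    exact mul_le_one₀ ((PiLp.norm_apply_le x j).trans hx) (norm_nonneg _)
      ((PiLp.norm_apply_le x k).trans hx)
  have h1 : ∀ p : EuclideanSpace ℝ (Fin m),
      ∑ j, ∑ k, p j * p k * ∫ x, x j * x k ∂𝒟 = ∫ x, ⟪x, p⟫ ^ 2 ∂𝒟 := by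
    intro p
    have : ∀ x : EuclideanSpace ℝ (Fin m), ⟪x, p⟫ ^ 2 = ∑ j, ∑ k, p j * p k * (x j * x k) := by
      intro x
      simp only [PiLp.inner_apply, sq, Finset.sum_mul_sum]
      refine Finset.sum_congr rfl fun j _ => Finset.sum_congr rfl fun k _ => ?_
      simp; ring
    simp_rw [this]
    rw [integral_finsetSum _ (fun j _ => integrable_finsetSum _ fun k _ => (hint j k).const_mul _)]
    refine Finset.sum_congr rfl fun j _ => ?_
    rw [integral_finsetSum _ (fun k _ => (hint j k).const_mul _)]
    refine Finset.sum_congr rfl fun k _ => ?_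
    rw [integral_const_mul]
  have h2 : ∀ p q : EuclideanSpace ℝ (Fin m), ‖p‖ = ‖q‖ →
      ∫ x, ⟪x, p⟫ ^ 2 ∂𝒟 = ∫ x, ⟪x, q⟫ ^ 2 ∂𝒟 := by
    intro p q h
    set R := Submodule.reflection (ℝ ∙ (p - q))ᗮ with hR
    have hRp : R p = q := Submodule.reflection_sub h
    have e : ∫ x, ⟪x, q⟫ ^ 2 ∂𝒟 = ∫ x, ⟪x, q⟫ ^ 2 ∂(𝒟.map R) := by rw [hrot]
    rw [e, integral_map R.continuous.measurable.aemeasurable (by fun_prop)]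
    refine integral_congr_ae (Filter.Eventually.of_forall fun x => ?_)
    simp only
    rw [← hRp, R.inner_map_map]
  by_cases hex : ∃ p0 : EuclideanSpace ℝ (Fin m), ‖p0‖ = 1
  · obtain ⟨p0, hp0⟩ := hex
    refine ⟨∫ x, ⟪x, p0⟫ ^ 2 ∂𝒟, integral_nonneg fun x => sq_nonneg _, fun p hp => ?_⟩
    rw [h1, h2 p p0 (hp.trans hp0.symm)]
  · exact ⟨0, le_rfl, fun p hp => absurd ⟨p, hp⟩ hex⟩

lemma aux_exp (c₁ c₂ K : ℝ) (h1 : 0 < c₁) (h2 : 0 < c₂) :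
    ∃ c : ℝ, 0 < c ∧ ∃ n₀ : ℕ, ∀ n : ℕ, n₀ ≤ n →
      Real.exp (-c₁ * n) + K * Real.exp (-c₂ * n) ≤ Real.exp (-c * n) := by
  set c := min c₁ c₂ / 2 with hc
  have hc0 : 0 < c := by positivity
  refine ⟨c, hc0, ?_⟩
  have ht : Filter.Tendsto (fun n : ℕ => (1 + |K|) * Real.exp (-(c * n))) Filter.atTop (nhds ((1 + |K|) * 0)) := by
    refine Filter.Tendsto.const_mul _ ?_
    exact Real.tendsto_exp_neg_atTop_nhds_zero.comp
      (Filter.Tendsto.const_mul_atTop hc0 tendsto_natCast_atTop_atTop)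
  rw [mul_zero] at ht
  obtain ⟨n₀, hn₀⟩ := Filter.eventually_atTop.1 (ht.eventually (gt_mem_nhds one_pos))
  refine ⟨n₀, fun n hn => ?_⟩
  have hh := (hn₀ n hn).le
  have hm1 : min c₁ c₂ ≤ c₁ := min_le_left _ _
  have hm2 : min c₁ c₂ ≤ c₂ := min_le_right _ _
  have hn0 : (0 : ℝ) ≤ n := by positivity
  have e1 : Real.exp (-c₁ * n) ≤ Real.exp (-(2 * c) * n) := by
    apply Real.exp_le_exp.2; nlinarith
  have e2 : Real.exp (-c₂ * n) ≤ Real.exp (-(2 * c) * n) := by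
    apply Real.exp_le_exp.2; nlinarith
  calc _ ≤ Real.exp (-(2 * c) * n) + |K| * Real.exp (-(2 * c) * n) := by
        gcongr
        exact le_abs_self K
    _ = ((1 + |K|) * Real.exp (-(c * n))) * Real.exp (-c * n) := by
        rw [show -(2 * c) * n = -(c * n) + -c * n by ring, Real.exp_add]; ring
    _ ≤ 1 * Real.exp (-c * n) := by gcongr
    _ = _ := one_mul _

/-- (Theorem 4.1 of the paper.) Under the two-cluster stochastic ball
model with `Δ > 2`: if minimizing the 2-means objective recovers the planted clusters
with probability `1 − e^{−Ω(n)}`, then spectral k-means clustering also recovers the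
planted clusters with probability `1 − e^{−Ω(n)}`. -/
theorem spectral_kmeans_recovers_planted_clusters
    (m : ℕ) (γ : Fin 2 → EuclideanSpace ℝ (Fin m))
    (hΔ : 2 < ‖γ 0 - γ 1‖)
    (𝒟 : Measure (EuclideanSpace ℝ (Fin m))) [IsProbabilityMeasure 𝒟]
    (hrot : ∀ T : EuclideanSpace ℝ (Fin m) ≃ₗᵢ[ℝ] EuclideanSpace ℝ (Fin m),
      𝒟.map T = 𝒟)
    (hball : 𝒟 {r | ‖r‖ ≤ 1} = 1)
    (hkmeans : ∃ c' : ℝ, 0 < c' ∧ ∃ n₀' : ℕ, ∀ n : ℕ, n₀' ≤ n →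
      ENNReal.ofReal (1 - Real.exp (-c' * n)) ≤
        (Measure.pi fun _ : Fin 2 × Fin n => 𝒟)
          {r | ∀ T : Finset (Fin 2 × Fin n), T ≠ planted n → T ≠ (planted n)ᶜ →
            twoMeansObj (fun p : Fin 2 × Fin n => γ p.1 + r p) (planted n)
              < twoMeansObj (fun p : Fin 2 × Fin n => γ p.1 + r p) T}) :
    ∃ c : ℝ, 0 < c ∧ ∃ n₀ : ℕ, ∀ n : ℕ, n₀ ≤ n →
      ENNReal.ofReal (1 - Real.exp (-c * n)) ≤
        (Measure.pi fun _ : Fin 2 × Fin n => 𝒟)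
          {r | SpectralRecovers n (fun p : Fin 2 × Fin n => γ p.1 + r p)} := by
  obtain ⟨c', hc', n₀', hk⟩ := hkmeans
  have hball' : ∀ᵐ x ∂𝒟, ‖x‖ ≤ 1 := by
    rw [← mem_ae_iff_prob_eq_one (measurableSet_le measurable_norm measurable_const)] at hball
    exact hball
  obtain ⟨s, hs, hC⟩ := aux_cov 𝒟 hrot hball'
  set D := ‖γ 0 - γ 1‖ / 2 with hD
  have hD1 : 1 < D := by rw [hD]; linarith
  obtain ⟨δ, hδ0, hδ1, hδ⟩ : ∃ δ : ℝ, 0 < δ ∧ δ ≤ 1 ∧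
      4 * D * m * δ + 3 * m ^ 2 * δ < D ^ 2 - 1 := by
    have hA : (0 : ℝ) ≤ 4 * D * m + 3 * m ^ 2 := by positivity
    have hB : 0 < D ^ 2 - 1 := by nlinarith
    refine ⟨min 1 ((D ^ 2 - 1) / (4 * D * m + 3 * m ^ 2 + 1)), by positivity, min_le_left _ _, ?_⟩
    set δ := min 1 ((D ^ 2 - 1) / (4 * D * m + 3 * m ^ 2 + 1)) with hδ
    have h0 : 0 < δ := by positivity
    have h1 : δ ≤ (D ^ 2 - 1) / (4 * D * m + 3 * m ^ 2 + 1) := min_le_right _ _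
    rw [le_div_iff₀ (by positivity)] at h1
    nlinarith
  let f : (Fin m ⊕ (Fin m × Fin m)) → EuclideanSpace ℝ (Fin m) → ℝ := fun t x =>
    Sum.elim (fun j => x j) (fun jk => x jk.1 * x jk.2) t
  have hf : ∀ t, Measurable (f t) := by
    rintro (j | jk)
    · simp only [f, Sum.elim_inl]; fun_prop
    · simp only [f, Sum.elim_inr]; fun_prop
  have hb : ∀ t, ∀ᵐ x ∂𝒟, f t x ∈ Set.Icc (-1 : ℝ) 1 := by
    intro t
    filter_upwards [hball'] with x hx
    have hxj : ∀ j, |x j| ≤ 1 := fun j => (PiLp.norm_apply_le x j).trans hx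
    rw [Set.mem_Icc, ← abs_le]
    rcases t with j | jk
    · exact hxj j
    · simp only [f, Sum.elim_inr, abs_mul]
      exact mul_le_one₀ (hxj _) (abs_nonneg _) (hxj _)
  obtain ⟨c, hc, n₁, hn₁⟩ := aux_exp c' (δ ^ 2 / 2)
    (Fintype.card (Fin m ⊕ (Fin m × Fin m)) * 4) hc' (by positivity)
  refine ⟨c, hc, max 1 (max n₀' n₁), fun n hn => ?_⟩
  have hn0 : 0 < n := (le_max_left _ _).trans hn
  have hn1 : n₀' ≤ n := ((le_max_left _ _).trans (le_max_right _ _)).trans hn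
  have hn2 : n₁ ≤ n := ((le_max_right _ _).trans (le_max_right _ _)).trans hn
  have hK := hk n hn1
  have hU := aux_union 𝒟 f hf hb δ hδ0 hn0
  have hN : (Measure.pi fun _ : Fin 2 × Fin n => 𝒟) {r | ¬ ∀ p, ‖r p‖ ≤ 1} = 0 := by
    rw [← ae_iff, ae_all_iff]
    intro p
    exact (measurePreserving_eval (fun _ : Fin 2 × Fin n => 𝒟) p).quasiMeasurePreserving.ae hball'
  set P := Measure.pi fun _ : Fin 2 × Fin n => 𝒟 with hP
  have hsub : {r : Fin 2 × Fin n → EuclideanSpace ℝ (Fin m) | ∀ T : Finset (Fin 2 × Fin n), T ≠ planted n → T ≠ (planted n)ᶜ →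
            twoMeansObj (fun p : Fin 2 × Fin n => γ p.1 + r p) (planted n)
              < twoMeansObj (fun p : Fin 2 × Fin n => γ p.1 + r p) T} ⊆
      ({r | SpectralRecovers n (fun p : Fin 2 × Fin n => γ p.1 + r p)} ∪
        {r | ¬ ∀ t a, |∑ i, f t (r (a, i)) - n * ∫ x, f t x ∂𝒟| ≤ n * δ}) ∪
        {r | ¬ ∀ p, ‖r p‖ ≤ 1} := by
    intro r hr
    by_cases h1 : ∀ p, ‖r p‖ ≤ 1
    swap
    · right; exact h1
    by_cases h2 : ∀ t a, |∑ i, f t (r (a, i)) - n * ∫ x, f t x ∂𝒟| ≤ n * δ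
    swap
    · left; right; exact h2
    left; left
    intro y hy
    refine ⟨?_, fun θ => hr _⟩
    refine aux_det hn0 γ r h1 (fun j k => ∫ x, x j * x k ∂𝒟) δ s hs hδ0.le hδ1 hΔ hδ ?_ ?_ hC y hy
    · intro a j
      have := h2 (Sum.inl j) a
      simp only [f, Sum.elim_inl] at this
      rwa [aux_mean 𝒟 hrot j, mul_zero, sub_zero] at this
    · intro a j k
      exact h2 (Sum.inr (j, k)) a
  have hfin := hK.trans ((measure_mono hsub).trans ((measure_union_le _ _).trans
    (add_le_add (measure_union_le _ _) le_rfl)))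
  rw [hN, add_zero] at hfin
  have hfin2 := hfin.trans (add_le_add le_rfl hU)
  have hfin3 := tsub_le_iff_right.2 hfin2
  refine le_trans ?_ hfin3
  rw [← ENNReal.ofReal_sub _ (by positivity)]
  apply ENNReal.ofReal_le_ofReal
  have := hn₁ n hn2
  linarith
end

section
/- Let x_1,…,x_N ∈ ℝ^m be partitioned into two planted clusters A*, B* such that ‖x_i − γ‖₂ ≤ 1 for i ∈ A* and ‖x_i + γ‖₂ ≤ 1 for i ∈ B*, where γ ∈ ℝ^m with ‖γ‖₂ > 1. Suppose (A*, B*) is the unique minimizer of the 2-means objective over all partitions of {1,…,N} into two clusters. Let z be a leading eigenvector of Φ₀Φ₀ᵀ satisfying |γᵀz| > ‖z‖₂, and set y := Φ₀ᵀz (a leading eigenvector of Φ₀ᵀΦ₀). Then the planted partition (A*, B*) equals a threshold partition of y, and it is the unique minimizer of the 2-means objective among all threshold partitions of y; hence spectral k-means clustering recovers the planted clusters. -/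
open scoped BigOperators RealInnerProductSpace
open Finset

namespace Stmt12

variable {m N : ℕ}

/-- The mean of the points of `x` indexed by the finset `S`. -/
noncomputable def clusterMean (x : Fin N → EuclideanSpace ℝ (Fin m))
    (S : Finset (Fin N)) : EuclideanSpace ℝ (Fin m) :=
  ((S.card : ℝ))⁻¹ • ∑ i ∈ S, x i

/-- The 2-means objective of the partition `(S, Sᶜ)` of the points `x`. -/
noncomputable def twoMeansObj (x : Fin N → EuclideanSpace ℝ (Fin m))
    (S : Finset (Fin N)) : ℝ :=
  (∑ i ∈ S, ‖x i - clusterMean x S‖ ^ 2) + ∑ i ∈ Sᶜ, ‖x i - clusterMean x Sᶜ‖ ^ 2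

end Stmt12

open Stmt12

/-- (Lemma 4.2 of the paper.) Suppose the planted clusters lie in unit
balls centered at `γ` and `−γ` (`‖γ‖ > 1`), the planted partition uniquely minimizes the
2-means objective, and `z` is a leading eigenvector of `Φ₀Φ₀ᵀ` with `|γᵀz| > ‖z‖₂`.
Then, with `y := Φ₀ᵀz`, the planted partition is a threshold partition of `y` and is the
unique 2-means minimizer among threshold partitions of `y`; hence spectral k-means
clustering recovers the planted clusters. -/
theorem spectral_clustering_recovers
    (m N : ℕ) (x : Fin N → EuclideanSpace ℝ (Fin m))
    (γ : EuclideanSpace ℝ (Fin m)) (hγ : 1 < ‖γ‖)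
    (S : Finset (Fin N))
    (hSball : ∀ i ∈ S, ‖x i - γ‖ ≤ 1) (hScball : ∀ i ∈ Sᶜ, ‖x i + γ‖ ≤ 1)
    (hopt : ∀ T : Finset (Fin N), T ≠ S → T ≠ Sᶜ →
      twoMeansObj x S < twoMeansObj x T)
    (μc : EuclideanSpace ℝ (Fin m)) (hμc : μc = (N : ℝ)⁻¹ • ∑ i, x i)
    (z : EuclideanSpace ℝ (Fin m)) (lam : ℝ) (hz : z ≠ 0)
    (heig : (∑ i, ⟪x i - μc, z⟫ • (x i - μc)) = lam • z)
    (hlead : ∀ (w : EuclideanSpace ℝ (Fin m)) (lam' : ℝ), w ≠ 0 →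
      (∑ i, ⟪x i - μc, w⟫ • (x i - μc)) = lam' • w → |lam'| ≤ |lam|)
    (hsep : ‖z‖ < |⟪γ, z⟫|)
    (y : Fin N → ℝ) (hy : ∀ i, y i = ⟪x i - μc, z⟫) :
    (∃ θ : ℝ, S = Finset.univ.filter (fun i => y i < θ) ∨
      S = (Finset.univ.filter (fun i => y i < θ))ᶜ) ∧
    (∀ θ : ℝ, Finset.univ.filter (fun i => y i < θ) ≠ S →
      Finset.univ.filter (fun i => y i < θ) ≠ Sᶜ →
      twoMeansObj x S < twoMeansObj x (Finset.univ.filter (fun i => y i < θ))) := by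
  refine ⟨⟨-⟪μc, z⟫, ?_⟩, fun θ h1 h2 => hopt _ h1 h2⟩
  have hlt : ∀ i, y i < -⟪μc, z⟫ ↔ ⟪x i, z⟫ < 0 := by
    intro i
    rw [hy, inner_sub_left]
    constructor <;> intro h <;> linarith
  have hA : ∀ i ∈ S, |⟪x i, z⟫ - ⟪γ, z⟫| ≤ ‖z‖ := by
    intro i hi
    rw [← inner_sub_left]
    refine (abs_real_inner_le_norm _ _).trans ?_
    nlinarith [hSball i hi, norm_nonneg z]
  have hB : ∀ i ∈ Sᶜ, |⟪x i, z⟫ + ⟪γ, z⟫| ≤ ‖z‖ := by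
    intro i hi
    rw [← inner_add_left]
    refine (abs_real_inner_le_norm _ _).trans ?_
    nlinarith [hScball i hi, norm_nonneg z]
  rcases lt_abs.mp hsep with h | h
  · right
    ext i
    simp only [mem_compl, mem_filter, mem_univ, true_and, hlt]
    by_cases hi : i ∈ S
    · have := abs_le.mp (hA i hi)
      simp only [hi, true_iff, not_lt]
      linarith
    · have := abs_le.mp (hB i (mem_compl.mpr hi))
      simp only [hi, false_iff, not_not]
      linarith
  · left
    ext i
    simp only [mem_filter, mem_univ, true_and, hlt]
    by_cases hi : i ∈ S
    · have := abs_le.mp (hA i hi)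
      simp only [hi, true_iff]
      linarith
    · have := abs_le.mp (hB i (mem_compl.mpr hi))
      simp only [hi, false_iff, not_lt]
      linarith
end

section
/- Let γ_a, γ_b ∈ ℝ^m, set O := (γ_a + γ_b)/2 and Δ_{ab} := ‖γ_a − γ_b‖₂. Let x_{a,i} := γ_a + r_{a,i} and x_{b,j} := γ_b + r_{b,j} for i, j = 1,…,n with ‖r_{a,i}‖₂ ≤ 1 and ‖r_{b,j}‖₂ ≤ 1 for all i, j, and let c_a, c_b be the respective empirical centers. Suppose ε > 0 satisfies ‖c_a − γ_a‖₂ ≤ ε, ‖c_b − γ_b‖₂ ≤ ε, and |Σ_{j=1}^n ‖x_{b,j} − O‖₂² − Σ_{j=1}^n ‖x_{a,j} − O‖₂²| ≤ 2nε. Then Σ_{i=1}^n Σ_{j=1}^n ‖x_{a,i} − x_{b,j}‖₂² − Σ_{i=1}^n Σ_{j=1}^n ‖x_{a,i} − x_{a,j}‖₂² ≥ n²·Δ_{ab}² − (6 + 4Δ_{ab})·n²·ε. -/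
open scoped BigOperators

lemma sum_sq_aux {m n : ℕ} (y z : Fin n → EuclideanSpace ℝ (Fin m)) :
    ∑ i, ∑ j, ‖y i - z j‖ ^ 2 = n * ∑ i, ‖y i‖ ^ 2 + n * ∑ j, ‖z j‖ ^ 2
      - 2 * inner ℝ (∑ i, y i) (∑ j, z j) := by
  simp only [norm_sub_sq_real, Finset.sum_add_distrib, Finset.sum_sub_distrib, sum_inner,
    inner_sum, Finset.mul_sum, Finset.sum_const, Finset.card_univ, Fintype.card_fin, nsmul_eq_mul]
  rw [Finset.sum_comm (f := fun i j => 2 * inner ℝ (y i) (z j))]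
  ring

/-- Lower bound on the difference of total between-cluster and
within-cluster squared distances:
`ΣᵢΣⱼ‖x_{a,i} − x_{b,j}‖² − ΣᵢΣⱼ‖x_{a,i} − x_{a,j}‖² ≥ n²Δ_{ab}² − (6 + 4Δ_{ab})n²ε`. -/
theorem difference_of_average_distances
    (m n : ℕ) (hn : 0 < n)
    (γa γb : EuclideanSpace ℝ (Fin m))
    (O : EuclideanSpace ℝ (Fin m)) (hO : O = (2 : ℝ)⁻¹ • (γa + γb))
    (Δab : ℝ) (hΔab : Δab = ‖γa - γb‖)
    (ra rb : Fin n → EuclideanSpace ℝ (Fin m))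
    (hra : ∀ i, ‖ra i‖ ≤ 1) (hrb : ∀ j, ‖rb j‖ ≤ 1)
    (xa xb : Fin n → EuclideanSpace ℝ (Fin m))
    (hxa : ∀ i, xa i = γa + ra i) (hxb : ∀ j, xb j = γb + rb j)
    (ca cb : EuclideanSpace ℝ (Fin m))
    (hca : ca = (n : ℝ)⁻¹ • ∑ i, xa i) (hcb : cb = (n : ℝ)⁻¹ • ∑ j, xb j)
    (ε : ℝ) (hε : 0 < ε)
    (hcenter_a : ‖ca - γa‖ ≤ ε) (hcenter_b : ‖cb - γb‖ ≤ ε)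
    (hmid : |(∑ j, ‖xb j - O‖ ^ 2) - ∑ j, ‖xa j - O‖ ^ 2| ≤ 2 * n * ε) :
    (n : ℝ) ^ 2 * Δab ^ 2 - (6 + 4 * Δab) * n ^ 2 * ε
      ≤ (∑ i, ∑ j, ‖xa i - xb j‖ ^ 2) - ∑ i, ∑ j, ‖xa i - xa j‖ ^ 2 := by
  have hn0 : (n : ℝ) ≠ 0 := by positivity
  have hnp : (0 : ℝ) < n := by positivity
  set d := γa - γb with hd
  set u := ca - γa with hu
  set v := cb - γb with hv
  have hSa : ∑ i, (xa i - O) = (n : ℝ) • ((2 : ℝ)⁻¹ • d + u) := by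
    have h1 : ∑ i, xa i = (n : ℝ) • ca := by rw [hca, smul_smul, mul_inv_cancel₀ hn0, one_smul]
    rw [Finset.sum_sub_distrib, h1, Finset.sum_const, Finset.card_univ, Fintype.card_fin,
      ← Nat.cast_smul_eq_nsmul ℝ, hO, hu, hd]
    module
  have hSb : ∑ i, (xb i - O) = (n : ℝ) • (-((2 : ℝ)⁻¹ • d) + v) := by
    have h1 : ∑ i, xb i = (n : ℝ) • cb := by rw [hcb, smul_smul, mul_inv_cancel₀ hn0, one_smul]
    rw [Finset.sum_sub_distrib, h1, Finset.sum_const, Finset.card_univ, Fintype.card_fin,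
      ← Nat.cast_smul_eq_nsmul ℝ, hO, hv, hd]
    module
  have hv1 : ‖v‖ ≤ 1 := by
    have h1 : v = (n : ℝ)⁻¹ • ∑ j, rb j := by
      have h2 : ∑ j, xb j = (n : ℝ) • γb + ∑ j, rb j := by
        simp only [hxb, Finset.sum_add_distrib, Finset.sum_const, Finset.card_univ,
          Fintype.card_fin, Nat.cast_smul_eq_nsmul]
      rw [hv, hcb, h2, smul_add, smul_smul, inv_mul_cancel₀ hn0, one_smul, add_sub_cancel_left]
    have h3 : ‖∑ j, rb j‖ ≤ n := by
      refine (norm_sum_le _ _).trans ((Finset.sum_le_sum fun j _ => hrb j).trans ?_)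
      simp
    rw [h1, norm_smul, Real.norm_of_nonneg (by positivity), inv_mul_le_iff₀ hnp, mul_one]
    exact h3
  have e1 : ∀ i j, xa i - xb j = (xa i - O) - (xb j - O) := fun i j => by abel
  have e2 : ∀ i j, xa i - xa j = (xa i - O) - (xa j - O) := fun i j => by abel
  have k1 := sum_sq_aux (fun i => xa i - O) (fun j => xb j - O)
  have k2 := sum_sq_aux (fun i => xa i - O) (fun j => xa j - O)
  simp only [← e1] at k1
  simp only [← e2] at k2
  rw [k1, k2, hSa, hSb]
  have hm := (abs_le.mp hmid).1
  have a1 : -(‖d‖ * ε) ≤ inner ℝ d u := by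
    have := (abs_le.mp (abs_real_inner_le_norm d u)).1
    have := mul_le_mul_of_nonneg_left hcenter_a (norm_nonneg d)
    linarith
  have a2 : inner ℝ d v ≤ ‖d‖ * ε := by
    have := (abs_le.mp (abs_real_inner_le_norm d v)).2
    have := mul_le_mul_of_nonneg_left hcenter_b (norm_nonneg d)
    linarith
  have a3 : inner ℝ u v ≤ ε := by
    have := (abs_le.mp (abs_real_inner_le_norm u v)).2
    have := mul_le_mul hcenter_a hv1 (norm_nonneg v) hε.le
    linarith
  have a4 := real_inner_self_eq_norm_sq d
  have a5 := real_inner_self_eq_norm_sq u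
  have c1 := real_inner_comm u d
  simp only [inner_smul_left, inner_smul_right, inner_add_left, inner_add_right, inner_neg_right,
    a4, a5, c1, hΔab, conj_trivial]
  have key : 0 ≤ (n : ℝ) ^ 2 * (3 * (inner ℝ d u + ‖d‖ * ε) + (‖d‖ * ε - inner ℝ d v)
      + 2 * (ε - inner ℝ u v) + 2 * ‖u‖ ^ 2 + 2 * ε) := by
    apply mul_nonneg (by positivity)
    nlinarith [sq_nonneg ‖u‖]
  have hm2 := mul_le_mul_of_nonneg_left hm hnp.le
  nlinarith
end

section
/- Let Δ > 2, let N be a positive integer divisible by 4, and consider the multiset of N points on the real line consisting of N/4 copies of each of −Δ/2 − 1, −Δ/2 + 1, Δ/2 − 1, Δ/2 + 1. Let the planted partition assign the points at −Δ/2 ± 1 to one cluster and the points at Δ/2 ± 1 to the other, and let the alternative partition assign the N/4 points at −Δ/2 − 1 to one cluster and the remaining 3N/4 points to the other. Then the 2-means objective of the alternative partition is strictly smaller than that of the planted partition if and only if Δ < 1 + √3. (In particular, for 2 < Δ < 1 + √3, minimizing the 2-means objective does not recover the planted clusters, disproving the conjecture that center separation Δ > 2 suffices.) -/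
open scoped BigOperators

namespace Stmt17

variable {I : Type*} [Fintype I] [DecidableEq I]

/-- Mean of the points of `x` indexed by the finset `S`. -/
noncomputable def clusterMean (x : I → ℝ) (S : Finset I) : ℝ :=
  ((S.card : ℝ))⁻¹ * ∑ i ∈ S, x i

/-- The 2-means objective of the partition `(S, Sᶜ)` of the points `x`. -/
noncomputable def twoMeansObj (x : I → ℝ) (S : Finset I) : ℝ :=
  (∑ i ∈ S, (x i - clusterMean x S) ^ 2) + ∑ i ∈ Sᶜ, (x i - clusterMean x Sᶜ) ^ 2

end Stmt17

open Stmt17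

/-- For `N = 4M` points on the line consisting of `M` copies of each of
`−Δ/2 − 1, −Δ/2 + 1, Δ/2 − 1, Δ/2 + 1` (with `Δ > 2`), the alternative partition that
isolates the `M` leftmost points beats the planted partition (left ball vs.\ right ball)
in the 2-means objective if and only if `Δ < 1 + √3`. -/
theorem planted_clusters_not_optimal_iff
    (M : ℕ) (hM : 0 < M) (Δ : ℝ) (hΔ : 2 < Δ)
    (x : Fin 4 × Fin M → ℝ)
    (hx : ∀ p, x p = ![-Δ/2 - 1, -Δ/2 + 1, Δ/2 - 1, Δ/2 + 1] p.1)
    (planted : Finset (Fin 4 × Fin M))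
    (hplanted : planted = Finset.univ.filter (fun p => (p.1 : ℕ) < 2))
    (alt : Finset (Fin 4 × Fin M))
    (halt : alt = Finset.univ.filter (fun p => p.1 = 0)) :
    twoMeansObj x alt < twoMeansObj x planted ↔ Δ < 1 + Real.sqrt 3 := by
  have hM' : (M : ℝ) ≠ 0 := by positivity
  have hMp : (0 : ℝ) < M := by exact_mod_cast hM
  have key : ∀ (T : Finset (Fin 4)) (f : Fin 4 → ℝ),
      ∑ p ∈ T ×ˢ (Finset.univ : Finset (Fin M)), f p.1 = M * ∑ k ∈ T, f k := by
    intro T f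
    rw [Finset.sum_product]
    simp [Finset.mul_sum]
  have hx' : x = fun p => ![-Δ/2 - 1, -Δ/2 + 1, Δ/2 - 1, Δ/2 + 1] p.1 := funext hx
  have hp : planted = ({0, 1} : Finset (Fin 4)) ×ˢ Finset.univ := by
    rw [hplanted]; ext ⟨a, b⟩; fin_cases a <;> simp
  have hpc : plantedᶜ = ({2, 3} : Finset (Fin 4)) ×ˢ Finset.univ := by
    rw [hplanted]; ext ⟨a, b⟩; fin_cases a <;> simp
  have ha : alt = ({0} : Finset (Fin 4)) ×ˢ Finset.univ := by
    rw [halt]; ext ⟨a, b⟩; fin_cases a <;> simp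
  have hac : altᶜ = ({1, 2, 3} : Finset (Fin 4)) ×ˢ Finset.univ := by
    rw [halt]; ext ⟨a, b⟩; fin_cases a <;> simp
  have mean : ∀ T : Finset (Fin 4), clusterMean x (T ×ˢ Finset.univ) =
      (T.card : ℝ)⁻¹ * ∑ k ∈ T, ![-Δ/2 - 1, -Δ/2 + 1, Δ/2 - 1, Δ/2 + 1] k := by
    intro T
    unfold clusterMean
    rw [hx', key, Finset.card_product]
    simp only [Finset.card_univ, Fintype.card_fin, Nat.cast_mul, mul_inv]
    field_simp
  have sq : ∀ (T : Finset (Fin 4)) (c : ℝ), ∑ p ∈ T ×ˢ (Finset.univ : Finset (Fin M)),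
      (x p - c) ^ 2 = M * ∑ k ∈ T, (![-Δ/2 - 1, -Δ/2 + 1, Δ/2 - 1, Δ/2 + 1] k - c) ^ 2 := by
    intro T c
    rw [← key T (fun k => (![-Δ/2 - 1, -Δ/2 + 1, Δ/2 - 1, Δ/2 + 1] k - c) ^ 2), hx']
  have c3 : ({1, 2, 3} : Finset (Fin 4)).card = 3 := by decide
  have c2 : ({2, 3} : Finset (Fin 4)).card = 2 := by decide
  have c1 : ({0, 1} : Finset (Fin 4)).card = 2 := by decide
  have s3 : ∀ f : Fin 4 → ℝ, ∑ k ∈ ({1, 2, 3} : Finset (Fin 4)), f k = f 1 + f 2 + f 3 := by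
    intro f
    rw [Finset.sum_insert (by decide), Finset.sum_pair (by decide)]; ring
  have s2 : ∀ f : Fin 4 → ℝ, ∑ k ∈ ({2, 3} : Finset (Fin 4)), f k = f 2 + f 3 := by
    intro f
    rw [Finset.sum_pair (by decide)]
  have s1 : ∀ f : Fin 4 → ℝ, ∑ k ∈ ({0, 1} : Finset (Fin 4)), f k = f 0 + f 1 := by
    intro f
    rw [Finset.sum_pair (by decide)]
  have e1 : twoMeansObj x planted = 4 * M := by
    unfold twoMeansObj
    rw [hpc, hp, sq, sq, mean, mean, c1, c2, s1, s1, s2, s2]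
    simp
    ring
  have e2 : twoMeansObj x alt = 4 * M + M * (2 / 3) * (Δ ^ 2 - 2 * Δ - 2) := by
    unfold twoMeansObj
    rw [hac, ha, sq, sq, mean, mean, c3, s3, s3]
    simp
    ring
  rw [e1, e2]
  have h3 : Real.sqrt 3 ^ 2 = 3 := Real.sq_sqrt (by norm_num)
  have h30 : 0 ≤ Real.sqrt 3 := Real.sqrt_nonneg 3
  have fac : M * (2 / 3) * (Δ ^ 2 - 2 * Δ - 2)
      = (M * (2 / 3) * (Δ - 1 + Real.sqrt 3)) * (Δ - 1 - Real.sqrt 3) := by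
    linear_combination (M * (2 / 3) : ℝ) * h3
  have hpos : 0 < M * (2 / 3) * (Δ - 1 + Real.sqrt 3) := by
    apply mul_pos (by positivity); linarith
  rw [fac]
  constructor
  · intro h
    by_contra hc
    have : 0 ≤ Δ - 1 - Real.sqrt 3 := by linarith
    have := mul_nonneg hpos.le this
    linarith
  · intro h
    have := mul_neg_of_pos_of_neg hpos (show Δ - 1 - Real.sqrt 3 < 0 by linarith)
    linarith
end
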